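/- arXiv:1510.01409 — 3 statements merged into one kernel-verified Lean document; each statement's English description precedes it below -/
import Mathlib

section
/- Let V be a real inner product space, l ≥ 1, p ≥ 2, a₁,…,a_l > 0 and v₁,…,v_l ∈ V. If p > 2, or if p = 2 and v₁,…,v_l are linearly independent, then the function G : [0,∞)^l → ℝ defined by G(s₁,…,s_l) = Σ_{j=1}^{l} (a_j/2) s_j^{2/p} − (1/(2p)) ‖Σ_{j=1}^{l} s_j v_j‖² is strictly concave on [0,∞)^l. -/
/-!
The squared norm satisfies `‖tX + uY‖² = t‖X‖² + u‖Y‖² - tu‖X - Y‖²` when `t + u = 1`, so with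
`X = Σ x_j v_j` and `Y = Σ y_j v_j` the quadratic part of `G` is concave with defect proportional
to `tu‖X - Y‖²`, while each `s ↦ s^{2/p}` is concave on `[0,∞)` because `0 < 2/p ≤ 1`. If
`p > 2`, the powers are strictly concave and two distinct points differ in some coordinate, so the
sum of powers contributes strict inequality. If `p = 2`, linear independence makes `X ≠ Y`, so the
quadratic defect is strictly positive.
-/

noncomputable section

/-- The transformed energy `G(s₁,…,s_l) = Σ_j (a_j/2) s_j^{2/p} − (1/(2p)) ‖Σ_j s_j v_j‖²`. -/
def Gfun {V : Type*} [NormedAddCommGroup V] [InnerProductSpace ℝ V]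
    (l : ℕ) (p : ℝ) (a : Fin l → ℝ) (v : Fin l → V) : (Fin l → ℝ) → ℝ :=
  fun s => (∑ j, (a j / 2) * s j ^ ((2:ℝ)/p)) - (1/(2*p)) * ‖∑ j, s j • v j‖^2

/-- The exact convexity defect of the squared norm along a segment. -/
lemma norm_sq_convex_comb {V : Type*} [NormedAddCommGroup V] [InnerProductSpace ℝ V]
    (x y : V) {t u : ℝ} (htu : t + u = 1) :
    ‖t • x + u • y‖ ^ 2 = t * ‖x‖ ^ 2 + u * ‖y‖ ^ 2 - t * u * ‖x - y‖ ^ 2 := by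
  rw [norm_add_sq_real, norm_sub_sq_real, norm_smul, norm_smul, inner_smul_left,
    inner_smul_right, mul_pow, mul_pow, Real.norm_eq_abs, Real.norm_eq_abs, sq_abs, sq_abs]
  obtain rfl : u = 1 - t := by linarith
  simp only [conj_trivial]
  ring

/-- The transformed energy `G` is strictly concave on the closed positive orthant,
provided `p > 2`, or `p = 2` and the vectors `v_j` are linearly independent. -/
theorem Gfun_strictConcaveOn {V : Type*} [NormedAddCommGroup V] [InnerProductSpace ℝ V]
    (l : ℕ) (hl : 1 ≤ l) (p : ℝ) (hp : 2 ≤ p)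
    (a : Fin l → ℝ) (ha : ∀ j, 0 < a j) (v : Fin l → V)
    (hcase : 2 < p ∨ (p = 2 ∧ LinearIndependent ℝ v)) :
    StrictConcaveOn ℝ {s : Fin l → ℝ | ∀ j, 0 ≤ s j} (Gfun l p a v) := by
  have hp0 : 0 < p := by linarith
  refine ⟨convex_Ici (0 : Fin l → ℝ), ?_⟩
  intro x hx y hy hxy t u ht hu htu
  have hquad := norm_sq_convex_comb (∑ j, x j • v j) (∑ j, y j • v j) htu
  have hlin : ∑ j, (t • x + u • y) j • v j
      = t • (∑ j, x j • v j) + u • (∑ j, y j • v j) := by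
    simp only [Pi.add_apply, Pi.smul_apply, smul_eq_mul, add_smul, mul_smul,
      Finset.sum_add_distrib, Finset.smul_sum]
  have hsum : t * (∑ j, a j / 2 * x j ^ ((2:ℝ)/p)) + u * (∑ j, a j / 2 * y j ^ ((2:ℝ)/p))
      = ∑ j, a j / 2 * (t * x j ^ ((2:ℝ)/p) + u * y j ^ ((2:ℝ)/p)) := by
    rw [Finset.mul_sum, Finset.mul_sum, ← Finset.sum_add_distrib]
    exact Finset.sum_congr rfl fun j _ => by ring
  have hterm : ∀ j, a j / 2 * (t * x j ^ ((2:ℝ)/p) + u * y j ^ ((2:ℝ)/p))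
      ≤ a j / 2 * (t • x + u • y) j ^ ((2:ℝ)/p) := fun j =>
    mul_le_mul_of_nonneg_left
      ((Real.concaveOn_rpow (by positivity) ((div_le_one hp0).2 hp)).2
        (hx j) (hy j) ht.le hu.le htu) (half_pos (ha j)).le
  have hpow := Finset.sum_le_sum fun j (_ : j ∈ Finset.univ) => hterm j
  have hc : 0 < 1 / (2 * p) := by positivity
  -- It remains to see that one of the two concavity defects is strictly positive.
  suffices h : (∑ j, a j / 2 * (t * x j ^ ((2:ℝ)/p) + u * y j ^ ((2:ℝ)/p))
      < ∑ j, a j / 2 * (t • x + u • y) j ^ ((2:ℝ)/p))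
      ∨ 0 < ‖(∑ j, x j • v j) - ∑ j, y j • v j‖ ^ 2 by
    simp only [Gfun, smul_eq_mul]
    rw [hlin, hquad]
    rcases h with h | h
    · have : 0 ≤ 1 / (2 * p) * (t * u * ‖(∑ j, x j • v j) - ∑ j, y j • v j‖ ^ 2) := by
        positivity
      linarith
    · have : 0 < 1 / (2 * p) * (t * u * ‖(∑ j, x j • v j) - ∑ j, y j • v j‖ ^ 2) := by
        positivity
      linarith
  rcases hcase with hp2 | ⟨-, hv⟩
  · left
    obtain ⟨i, hi⟩ := Function.ne_iff.1 hxy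
    refine Finset.sum_lt_sum (fun j _ => hterm j) ⟨i, Finset.mem_univ i, ?_⟩
    exact mul_lt_mul_of_pos_left
      ((Real.strictConcaveOn_rpow (by positivity) ((div_lt_one hp0).2 hp2)).2
        (hx i) (hy i) hi ht hu htu) (half_pos (ha i))
  · right
    refine pow_pos (norm_pos_iff.2 (sub_ne_zero.2 fun h => hxy ?_)) 2
    funext i
    refine sub_eq_zero.1 (Fintype.linearIndependent_iff.1 hv (fun j => x j - y j) ?_ i)
    simp only [sub_smul, Finset.sum_sub_distrib, h, sub_self]

end
end

section
/- Let V be a real inner product space, l ≥ 1, p > 2, a₁,…,a_l > 0, and let v₁,…,v_l ∈ V be linearly independent. Then G(s₁,…,s_l) = Σ_{j=1}^{l} (a_j/2) s_j^{2/p} − (1/(2p)) ‖Σ_{j=1}^{l} s_j v_j‖² attains a global maximum over [0,∞)^l at a unique point (s̄₁,…,s̄_l), and this point satisfies s̄_j > 0 for every j ∈ {1,…,l}; moreover the gradient of G vanishes at (s̄₁,…,s̄_l). -/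
/-!
Write `q = 2/p`, so that `0 < q < 1`. Linear independence makes `s ↦ ∑ j, s j • v j` an injective
linear map on a finite-dimensional space, hence bounded below: `‖s‖ ≤ K * ‖∑ j, s j • v j‖`
(`exists_norm_le`). The quadratic term therefore dominates the sublinear powers `s j ^ q`, so
`G < 0 = G 0` far away (`exists_radius_Gfun_nonpos`), and the continuous function `G` attains its
maximum on the closed orthant.

If a maximizer had `s j = 0`, moving by `t > 0` in direction `e_j` would gain `(a j / 2) * t ^ q`
and lose only `O(t)`; as `q < 1` this is a net gain for small `t` (`pos_of_isMaxOn_Gfun`). So every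
maximizer lies in the open orthant, where the gradient vanishes by Fermat's theorem.

Two maximizers must coincide since, by concavity of `x ↦ x ^ q` and the parallelogram law, the value
at their midpoint would exceed the mean of their values by a positive multiple of
`‖∑ j, (s j - s' j) • v j‖ ^ 2` (`eq_of_isMaxOn_Gfun`).
-/

noncomputable section

section Aux

variable {V : Type*} [NormedAddCommGroup V] [InnerProductSpace ℝ V] {l : ℕ} {p : ℝ}
  {a : Fin l → ℝ} {v : Fin l → V}

lemma exists_norm_le (hv : LinearIndependent ℝ v) :
    ∃ K : ℝ, 0 < K ∧ ∀ s : Fin l → ℝ, ‖s‖ ≤ K * ‖∑ j, s j • v j‖ := by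
  obtain ⟨K, hK, h⟩ := LinearMap.exists_antilipschitzWith (Fintype.linearCombination ℝ v)
    (LinearMap.ker_eq_bot.mpr hv.fintypeLinearCombination_injective)
  refine ⟨K, hK, fun s => ?_⟩
  simpa [Fintype.linearCombination_apply] using h.le_mul_dist s 0

lemma continuous_Gfun (hp : 2 < p) : Continuous (Gfun l p a v) := by
  have hq : (0:ℝ) ≤ 2 / p := by positivity
  unfold Gfun
  refine Continuous.sub (continuous_finsetSum _ fun j _ => continuous_const.mul
    ((continuous_apply j).rpow_const fun _ => Or.inr hq)) (by fun_prop)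

lemma Gfun_zero (hp : 2 < p) : Gfun l p a v 0 = 0 := by
  have hq : (2:ℝ) / p ≠ 0 := by positivity
  simp [Gfun, Real.zero_rpow hq]

lemma exists_radius_Gfun_nonpos (hp : 2 < p) (ha : ∀ j, 0 < a j) (hv : LinearIndependent ℝ v) :
    ∃ R : ℝ, ∀ s : Fin l → ℝ, (∀ j, 0 ≤ s j) → R ≤ ‖s‖ → Gfun l p a v s ≤ 0 := by
  obtain ⟨K, hK, h⟩ := exists_norm_le hv
  have hp0 : 0 < p := by linarith
  have hA : 0 ≤ ∑ j, a j / 2 := Finset.sum_nonneg fun j _ => (half_pos (ha j)).le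
  set A := ∑ j, a j / 2 with hAdef
  -- For `R ≥ 1` the positive part is at most `A * R`, to be compared with `R ^ 2 / (2 p K ^ 2)`.
  refine ⟨max 1 (A * (2 * p * K ^ 2)), fun s hs hR => ?_⟩
  have h1 : 1 ≤ ‖s‖ := (le_max_left _ _).trans hR
  have h2 : A * (2 * p * K ^ 2) ≤ ‖s‖ := (le_max_right _ _).trans hR
  have hpow : ∀ j, s j ^ ((2:ℝ) / p) ≤ ‖s‖ := fun j => by
    have hj : s j ≤ ‖s‖ := (le_abs_self _).trans (norm_le_pi_norm s j)
    calc s j ^ ((2:ℝ) / p) ≤ ‖s‖ ^ ((2:ℝ) / p) :=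
          Real.rpow_le_rpow (hs j) hj (by positivity)
      _ ≤ ‖s‖ ^ (1:ℝ) :=
          Real.rpow_le_rpow_of_exponent_le h1 (by rw [div_le_one hp0]; exact hp.le)
      _ = ‖s‖ := Real.rpow_one _
  have hsum : ∑ j, (a j / 2) * s j ^ ((2:ℝ) / p) ≤ A * ‖s‖ := by
    rw [hAdef, Finset.sum_mul]
    exact Finset.sum_le_sum fun j _ => mul_le_mul_of_nonneg_left (hpow j) (half_pos (ha j)).le
  have hsq : ‖s‖ ^ 2 ≤ K ^ 2 * ‖∑ j, s j • v j‖ ^ 2 := by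
    rw [← mul_pow]; exact pow_le_pow_left₀ (norm_nonneg _) (h s) 2
  have hfin : A * ‖s‖ ≤ (1 / (2 * p)) * ‖∑ j, s j • v j‖ ^ 2 := by
    rw [one_div_mul_eq_div, le_div_iff₀ (by positivity)]
    refine le_of_mul_le_mul_left ?_ (pow_pos hK 2)
    nlinarith [mul_le_mul_of_nonneg_right h2 (norm_nonneg s)]
  unfold Gfun
  linarith

lemma pos_of_isMaxOn_Gfun (hp : 2 < p) (ha : ∀ j, 0 < a j) {s : Fin l → ℝ}
    (hs : ∀ j, 0 ≤ s j) (hmax : IsMaxOn (Gfun l p a v) {s : Fin l → ℝ | ∀ j, 0 ≤ s j} s)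
    (j : Fin l) : 0 < s j := by
  refine (hs j).lt_of_ne fun h0 => ?_
  have hp0 : 0 < p := by linarith
  have hq : (2:ℝ) / p < 1 := by rw [div_lt_one hp0]; exact hp
  set w := ∑ i, s i • v i with hw
  -- Optimality along `s + t e_j`, divided by `t ^ (2 / p)`.
  have key : ∀ t : ℝ, 0 < t → a j / 2 ≤
      t ^ (1 - (2:ℝ) / p) * ((1 / (2 * p)) * (2 * inner ℝ w (v j) + t * ‖v j‖ ^ 2)) := by
    intro t ht
    have hmem : s + Pi.single j t ∈ {s : Fin l → ℝ | ∀ j, 0 ≤ s j} := fun i => by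
      by_cases hij : i = j
      · subst hij; simpa using add_nonneg (hs i) ht.le
      · simpa [hij] using hs i
    have hle : Gfun l p a v (s + Pi.single j t) ≤ Gfun l p a v s := hmax hmem
    have hlin : ∑ i, (s + Pi.single j t : Fin l → ℝ) i • v i = w + t • v j := by
      simp only [Pi.add_apply, add_smul, Finset.sum_add_distrib, ← hw]
      congr 1
      rw [Finset.sum_eq_single j (fun i _ hij => by simp [hij]) (by simp)]
      simp
    have hsum : ∑ i, (a i / 2) * (s + Pi.single j t : Fin l → ℝ) i ^ ((2:ℝ) / p)
        = (∑ i, (a i / 2) * s i ^ ((2:ℝ) / p)) + (a j / 2) * t ^ ((2:ℝ) / p) := by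
      rw [← sub_eq_iff_eq_add', ← Finset.sum_sub_distrib,
        Finset.sum_eq_single j (fun i _ hij => by simp [hij]) (by simp)]
      have hq0 : (2:ℝ) / p ≠ 0 := by positivity
      simp [← h0, Real.zero_rpow hq0]
    have hnorm : ‖w + t • v j‖ ^ 2 = ‖w‖ ^ 2 + 2 * (t * inner ℝ w (v j)) + t ^ 2 * ‖v j‖ ^ 2 := by
      rw [norm_add_sq_real, inner_smul_right, norm_smul, mul_pow, Real.norm_eq_abs, sq_abs]
    unfold Gfun at hle
    rw [hlin, hsum, hnorm, ← hw] at hle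
    have htq : 0 < t ^ ((2:ℝ) / p) := Real.rpow_pos_of_pos ht _
    have hsplit : t ^ (1 - (2:ℝ) / p) * t ^ ((2:ℝ) / p) = t := by
      rw [← Real.rpow_add ht]; simp
    refine le_of_mul_le_mul_right ?_ htq
    rw [mul_right_comm, hsplit]
    linarith
  have hlim : Filter.Tendsto (fun t : ℝ =>
      t ^ (1 - (2:ℝ) / p) * ((1 / (2 * p)) * (2 * inner ℝ w (v j) + t * ‖v j‖ ^ 2)))
      (nhdsWithin 0 (Set.Ioi 0)) (nhds 0) := by
    have hc : Continuous (fun t : ℝ =>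
        t ^ (1 - (2:ℝ) / p) * ((1 / (2 * p)) * (2 * inner ℝ w (v j) + t * ‖v j‖ ^ 2))) :=
      (continuous_id.rpow_const fun _ => Or.inr (by linarith)).mul (by fun_prop)
    have h := hc.tendsto 0
    rw [Real.zero_rpow (by linarith), zero_mul] at h
    exact h.mono_left nhdsWithin_le_nhds
  have : a j / 2 ≤ 0 := ge_of_tendsto hlim
    (Filter.eventually_of_mem self_mem_nhdsWithin fun t ht => key t ht)
  linarith [ha j]

lemma eq_of_isMaxOn_Gfun (hp : 2 < p) (ha : ∀ j, 0 < a j) (hv : LinearIndependent ℝ v)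
    {s r : Fin l → ℝ} (hs : ∀ j, 0 ≤ s j) (hr : ∀ j, 0 ≤ r j)
    (hsmax : IsMaxOn (Gfun l p a v) {s : Fin l → ℝ | ∀ j, 0 ≤ s j} s)
    (hrmax : IsMaxOn (Gfun l p a v) {s : Fin l → ℝ | ∀ j, 0 ≤ s j} r) : s = r := by
  have hp0 : 0 < p := by linarith
  set m : Fin l → ℝ := fun j => (1 / 2 : ℝ) * s j + (1 / 2 : ℝ) * r j with hm
  have hmem : m ∈ {s : Fin l → ℝ | ∀ j, 0 ≤ s j} := fun j => by
    have := hs j; have := hr j; simp only [hm]; positivity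
  have h1 : Gfun l p a v m ≤ Gfun l p a v s := hsmax hmem
  have h2 : Gfun l p a v m ≤ Gfun l p a v r := hrmax hmem
  have hconc : ∀ j, (1 / 2 : ℝ) * s j ^ ((2:ℝ) / p) + (1 / 2 : ℝ) * r j ^ ((2:ℝ) / p)
      ≤ m j ^ ((2:ℝ) / p) := fun j => by
    have := (Real.concaveOn_rpow (p := 2 / p) (by positivity)
      (by rw [div_le_one hp0]; exact hp.le)).2 (hs j) (hr j)
      (by norm_num : (0:ℝ) ≤ 1 / 2) (by norm_num : (0:ℝ) ≤ 1 / 2) (by norm_num)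
    simpa only [smul_eq_mul] using this
  have hsum : (1 / 2 : ℝ) * (∑ j, (a j / 2) * s j ^ ((2:ℝ) / p))
      + (1 / 2 : ℝ) * (∑ j, (a j / 2) * r j ^ ((2:ℝ) / p))
      ≤ ∑ j, (a j / 2) * m j ^ ((2:ℝ) / p) := by
    rw [Finset.mul_sum, Finset.mul_sum, ← Finset.sum_add_distrib]
    refine Finset.sum_le_sum fun j _ => ?_
    have := mul_le_mul_of_nonneg_left (hconc j) (half_pos (ha j)).le
    linarith
  set x := ∑ j, s j • v j with hx
  set y := ∑ j, r j • v j with hy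
  have hlin : ∑ j, m j • v j = (1 / 2 : ℝ) • (x + y) := by
    simp only [hm, add_smul, mul_smul, Finset.sum_add_distrib, ← Finset.smul_sum, smul_add, hx, hy]
  have hnorm : ‖(1 / 2 : ℝ) • (x + y)‖ ^ 2
      = (1 / 2) * ‖x‖ ^ 2 + (1 / 2) * ‖y‖ ^ 2 - (1 / 4) * ‖x - y‖ ^ 2 := by
    have := parallelogram_law_with_norm ℝ x y
    rw [norm_smul, mul_pow]
    norm_num
    linarith
  unfold Gfun at h1 h2
  rw [hlin, hnorm, ← hx] at h1
  rw [hlin, hnorm, ← hy] at h2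
  have hxy : (1 / (2 * p)) * ‖x - y‖ ^ 2 ≤ 0 := by linarith
  have hzero : ‖x - y‖ ^ 2 ≤ 0 := nonpos_of_mul_nonpos_right hxy (by positivity)
  have hxy0 : x - y = 0 := by
    rw [← norm_eq_zero]; exact pow_eq_zero_iff two_ne_zero |>.mp (le_antisymm hzero (by positivity))
  have hdiff : ∑ j, (s j - r j) • v j = 0 := by
    simpa only [sub_smul, Finset.sum_sub_distrib] using hxy0
  funext j
  exact sub_eq_zero.mp (Fintype.linearIndependent_iff.mp hv _ hdiff j)

end Aux

/-- For `p > 2` and linearly independent `v_j`, `G` attains its maximum over the closed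
positive orthant at a unique point, which lies in the open orthant and is a critical
point of `G`. -/
theorem Gfun_unique_interior_max {V : Type*} [NormedAddCommGroup V] [InnerProductSpace ℝ V]
    (l : ℕ) (hl : 1 ≤ l) (p : ℝ) (hp : 2 < p)
    (a : Fin l → ℝ) (ha : ∀ j, 0 < a j) (v : Fin l → V) (hv : LinearIndependent ℝ v) :
    ∃ sbar : Fin l → ℝ, (∀ j, 0 < sbar j) ∧
      IsMaxOn (Gfun l p a v) {s : Fin l → ℝ | ∀ j, 0 ≤ s j} sbar ∧
      (∀ s : Fin l → ℝ, (∀ j, 0 ≤ s j) →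
        IsMaxOn (Gfun l p a v) {s : Fin l → ℝ | ∀ j, 0 ≤ s j} s → s = sbar) ∧
      fderiv ℝ (Gfun l p a v) sbar = 0 := by
  have hclosed : IsClosed {s : Fin l → ℝ | ∀ j, 0 ≤ s j} := by
    simp only [Set.ofPred_forall]
    exact isClosed_iInter fun j => isClosed_le continuous_const (continuous_apply j)
  obtain ⟨R, hR⟩ := exists_radius_Gfun_nonpos hp ha hv
  obtain ⟨sbar, hmem, hmax⟩ := (continuous_Gfun (a := a) (v := v) hp).continuousOn.exists_isMaxOn' hclosed
    (show (0 : Fin l → ℝ) ∈ {s : Fin l → ℝ | ∀ j, 0 ≤ s j} from fun _ => le_rfl)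
    (by
      rw [Filter.eventually_inf_principal]
      filter_upwards [(tendsto_norm_cocompact_atTop (E := Fin l → ℝ)).eventually_ge_atTop R]
        with s hs hs0
      rw [Gfun_zero hp]
      exact hR s hs0 hs)
  have hpos := pos_of_isMaxOn_Gfun hp ha hmem hmax
  refine ⟨sbar, hpos, hmax, fun s hs hsmax => eq_of_isMaxOn_Gfun hp ha hv hs hmem hsmax hmax, ?_⟩
  have hnhds : {s : Fin l → ℝ | ∀ j, 0 ≤ s j} ∈ nhds sbar := by
    refine (Filter.eventually_all.mpr fun j => ?_)
    filter_upwards [(continuous_apply j).continuousAt.eventually (lt_mem_nhds (hpos j))] with s hs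
    exact le_of_lt hs
  exact (hmax.isLocalMax hnhds).fderiv_eq_zero

end
end

section
/- Let 0 < μ < 3, 2 ≤ p < 6−μ and q = 6/(6−μ). Let (u_n) be a sequence of measurable functions ℝ³ → ℝ that is bounded in L^{pq}(ℝ³), with u_n(x) → u(x) for a.e. x ∈ ℝ³ and u_n → u in L^{pq}(B_R(0)) for every R > 0. Then ∫_{ℝ³} | |u_n(x) − u(x)|^p − |u_n(x)|^p + |u(x)|^p |^{q} dx → 0 as n → ∞. -/
/-!
The proof is the classical argument of Brezis and Lieb. Write `a = u n x - ulim x`, `b = ulim x`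
and `F a b = | |a|^p - |a + b|^p + |b|^p |`. Since `F` is homogeneous of degree `p` and
`F 1 t → 0` as `t → 0`, for every `ε > 0` there is `C` with
`F a b ^ q ≤ ε |a|^(pq) + C |b|^(pq)` (`brezisLieb_pointwise`). Hence the positive part of
`F a b ^ q - ε |a|^(pq)` is dominated by `C |ulim|^(pq)`, which is integrable by Fatou's lemma, and
its integral tends to `0` by dominated convergence. What remains is `ε ∫ |u n - ulim|^(pq)`, which
is `O(ε)` uniformly in `n` because of the `L^{pq}` bound (`brezisLieb_lintegral`).
-/

open MeasureTheory Filter Topology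

noncomputable section

abbrev E3 := EuclideanSpace ℝ (Fin 3)

/-- The pointwise inequality behind the theorem: the cross term is an arbitrarily small multiple of
`|a|^(pq)` up to a multiple of `|b|^(pq)`. -/
lemma brezisLieb_pointwise {p q : ℝ} (hp : 0 < p) (hq : 0 < q) {ε : ℝ} (hε : 0 < ε) :
    ∃ C : ℝ, 0 ≤ C ∧ ∀ a b : ℝ,
      |(|a| ^ p - |a + b| ^ p + |b| ^ p)| ^ q ≤ ε * |a| ^ (p * q) + C * |b| ^ (p * q) := by
  have hcont : Continuous fun t : ℝ => |(1 - |1 + t| ^ p + |t| ^ p)| ^ q := by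
    have h1 : Continuous fun t : ℝ => |1 + t| ^ p :=
      (by fun_prop : Continuous fun t : ℝ => |1 + t|).rpow_const fun _ => Or.inr hp.le
    have h2 : Continuous fun t : ℝ => |t| ^ p :=
      continuous_abs.rpow_const fun _ => Or.inr hp.le
    exact ((continuous_const.sub h1).add h2).abs.rpow_const fun _ => Or.inr hq.le
  have h0 : |(1 - |1 + (0 : ℝ)| ^ p + |(0 : ℝ)| ^ p)| ^ q = 0 := by
    simp [Real.zero_rpow hp.ne', Real.zero_rpow hq.ne']
  have hev : ∀ᶠ t in 𝓝 (0 : ℝ), |(1 - |1 + t| ^ p + |t| ^ p)| ^ q < ε :=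
    hcont.continuousAt.eventually_lt continuousAt_const (by rw [h0]; exact hε)
  obtain ⟨δ, hδ, hδε⟩ := Metric.eventually_nhds_iff.1 hev
  refine ⟨(3 * (1 + 1 / δ) ^ p) ^ q, by positivity, fun a b => ?_⟩
  have hK : 1 ≤ 1 + 1 / δ := by
    have : 0 < 1 / δ := by positivity
    linarith
  by_cases hab : |b| < δ * |a|
  · have ha : a ≠ 0 := by
      rintro rfl
      simp only [abs_zero, mul_zero] at hab
      exact absurd hab (not_lt.2 (abs_nonneg b))
    have ha' : 0 < |a| := abs_pos.2 ha
    have ht := hδε (y := b / a) (by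
      rw [Real.dist_eq, sub_zero, abs_div, div_lt_iff₀ ha']; exact hab)
    have e1 : |a + b| ^ p = |a| ^ p * |1 + b / a| ^ p := by
      rw [← Real.mul_rpow (abs_nonneg _) (abs_nonneg _), ← abs_mul]
      congr 2; field_simp
    have e2 : |b| ^ p = |a| ^ p * |b / a| ^ p := by
      rw [← Real.mul_rpow (abs_nonneg _) (abs_nonneg _), ← abs_mul]
      congr 2; field_simp
    have e3 : |(|a| ^ p - |a + b| ^ p + |b| ^ p)|
        = |a| ^ p * |(1 - |1 + b / a| ^ p + |b / a| ^ p)| := by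
      rw [e1, e2, ← abs_of_nonneg (Real.rpow_nonneg (abs_nonneg a) p), ← abs_mul,
        abs_of_nonneg (Real.rpow_nonneg (abs_nonneg a) p)]
      congr 1; ring
    rw [e3, Real.mul_rpow (by positivity) (abs_nonneg _), ← Real.rpow_mul (abs_nonneg _),
      mul_comm]
    have hm : |(1 - |1 + b / a| ^ p + |b / a| ^ p)| ^ q * |a| ^ (p * q) ≤ ε * |a| ^ (p * q) := by
      gcongr
    have : 0 ≤ (3 * (1 + 1 / δ) ^ p) ^ q * |b| ^ (p * q) := by positivity
    linarith
  · push Not at hab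
    have haδ : |a| ≤ 1 / δ * |b| := by
      rw [one_div, ← div_eq_inv_mul, le_div_iff₀ hδ]; linarith
    have hb0 := abs_nonneg b
    have b1 : |a| ^ p ≤ ((1 + 1 / δ) * |b|) ^ p := by
      gcongr; linarith
    have b2 : |a + b| ^ p ≤ ((1 + 1 / δ) * |b|) ^ p := by
      have := abs_add_le a b
      gcongr; linarith
    have b3 : |b| ^ p ≤ ((1 + 1 / δ) * |b|) ^ p := by
      gcongr; nlinarith
    have c1 : 0 ≤ |a| ^ p := by positivity
    have c2 : 0 ≤ |a + b| ^ p := by positivity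
    have c3 : 0 ≤ |b| ^ p := by positivity
    have hF : |(|a| ^ p - |a + b| ^ p + |b| ^ p)| ≤ 3 * (1 + 1 / δ) ^ p * |b| ^ p := by
      rw [mul_assoc, ← Real.mul_rpow (by positivity) hb0, abs_le]
      constructor <;> linarith
    calc |(|a| ^ p - |a + b| ^ p + |b| ^ p)| ^ q
        ≤ (3 * (1 + 1 / δ) ^ p * |b| ^ p) ^ q := by gcongr
      _ = (3 * (1 + 1 / δ) ^ p) ^ q * |b| ^ (p * q) := by
        rw [Real.mul_rpow (by positivity) (by positivity), ← Real.rpow_mul hb0]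
      _ ≤ _ := by
        have : 0 ≤ ε * |a| ^ (p * q) := by positivity
        linarith

/-- The Brezis–Lieb convergence on a general measure space, with extended
nonnegative integrals `∫⁻`. -/
lemma brezisLieb_lintegral {α : Type*} [MeasurableSpace α] {ν : Measure α} {p q : ℝ}
    (hp : 0 < p) (hq : 0 < q) {u : ℕ → α → ℝ} (hu : ∀ n, AEMeasurable (u n) ν) {v : α → ℝ}
    (hv : AEMeasurable v ν)
    (hae : ∀ᵐ x ∂ν, Tendsto (fun n => u n x) atTop (𝓝 (v x)))
    (hvint : ∫⁻ x, ENNReal.ofReal (|v x| ^ (p * q)) ∂ν ≠ ⊤)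
    {M : ENNReal} (hM : M ≠ ⊤)
    (hbd : ∀ n, ∫⁻ x, ENNReal.ofReal (|u n x - v x| ^ (p * q)) ∂ν ≤ M) :
    Tendsto (fun n => ∫⁻ x, ENNReal.ofReal
      (|(|u n x - v x| ^ p - |u n x| ^ p + |v x| ^ p)| ^ q) ∂ν) atTop (𝓝 0) := by
  rw [ENNReal.tendsto_nhds_zero]
  intro η hη
  -- `ε` is chosen so small that `ε * M ≤ η / 2`
  obtain ⟨ε, hε, hεM⟩ : ∃ ε : ℝ, 0 < ε ∧ ENNReal.ofReal ε * M ≤ η / 2 := by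
    have ht : Tendsto (fun ε : ℝ => ENNReal.ofReal ε * M) (𝓝[>] 0) (𝓝 0) := by
      have h := ENNReal.Tendsto.mul_const (b := M)
        (ENNReal.tendsto_ofReal (tendsto_id (α := ℝ) (x := 𝓝 0))) (Or.inr hM)
      simp only [id, ENNReal.ofReal_zero, zero_mul] at h
      exact h.mono_left nhdsWithin_le_nhds
    have h2 := (ENNReal.tendsto_nhds_zero.1 ht) (η / 2) (ENNReal.half_pos hη.ne')
    obtain ⟨ε, h3, h4⟩ := (h2.and self_mem_nhdsWithin).exists
    exact ⟨ε, h4, h3⟩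
  obtain ⟨C, hC, hpt⟩ := brezisLieb_pointwise hp hq hε
  set F : ℕ → α → ℝ := fun n x => |(|u n x - v x| ^ p - |u n x| ^ p + |v x| ^ p)| ^ q with hFdef
  set A : ℕ → α → ℝ := fun n x => |u n x - v x| ^ (p * q) with hAdef
  have hle : ∀ n x, F n x ≤ ε * A n x + C * |v x| ^ (p * q) := fun n x => by
    have := hpt (u n x - v x) (v x)
    rwa [sub_add_cancel] at this
  have hAm : ∀ n, AEMeasurable (A n) ν := fun n => by
    have := hu n; simp only [hAdef]; fun_prop
  have hFm : ∀ n, AEMeasurable (F n) ν := fun n => by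
    have := hu n; simp only [hFdef]; fun_prop
  have hG : Tendsto (fun n => ∫⁻ x, ENNReal.ofReal (F n x - ε * A n x) ∂ν) atTop (𝓝 0) := by
    have key := tendsto_lintegral_of_dominated_convergence' (μ := ν)
      (F := fun n x => ENNReal.ofReal (F n x - ε * A n x)) (f := fun _ => 0)
      (fun x => ENNReal.ofReal (C * |v x| ^ (p * q)))
      (fun n => ((hFm n).sub ((hAm n).const_mul ε)).ennreal_ofReal)
      (fun n => Eventually.of_forall fun x => ENNReal.ofReal_le_ofReal (by
        have := hle n x; linarith))
      (by
        simp only [ENNReal.ofReal_mul hC]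
        rw [lintegral_const_mul' _ _ ENNReal.ofReal_ne_top]
        exact ENNReal.mul_ne_top ENNReal.ofReal_ne_top hvint)
      (by
        filter_upwards [hae] with x hx
        have hd : Tendsto (fun n => |u n x - v x|) atTop (𝓝 0) := by
          simpa using (hx.sub_const (v x)).abs
        have h1 : Tendsto (fun n => |u n x - v x| ^ p) atTop (𝓝 0) := by
          simpa [Real.zero_rpow hp.ne'] using hd.rpow_const (p := p) (Or.inr hp.le)
        have h2 : Tendsto (fun n => |u n x| ^ p) atTop (𝓝 (|v x| ^ p)) :=
          hx.abs.rpow_const (Or.inr hp.le)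
        have hF0 : Tendsto (fun n => F n x) atTop (𝓝 0) := by
          have := ((h1.sub h2).add_const (|v x| ^ p)).abs.rpow_const (p := q) (Or.inr hq.le)
          simpa [Real.zero_rpow hq.ne'] using this
        have hA0 : Tendsto (fun n => A n x) atTop (𝓝 0) := by
          simpa [Real.zero_rpow (mul_pos hp hq).ne'] using
            hd.rpow_const (p := p * q) (Or.inr (mul_pos hp hq).le)
        have := ENNReal.tendsto_ofReal (hF0.sub (hA0.const_mul ε))
        simpa using this)
    simpa using key
  filter_upwards [(ENNReal.tendsto_nhds_zero.1 hG) (η / 2) (ENNReal.half_pos hη.ne')] with n hn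
  calc ∫⁻ x, ENNReal.ofReal (F n x) ∂ν
      ≤ ∫⁻ x, (ENNReal.ofReal (F n x - ε * A n x)
          + ENNReal.ofReal ε * ENNReal.ofReal (A n x)) ∂ν := by
        refine lintegral_mono fun x => ?_
        rw [← ENNReal.ofReal_mul hε.le]
        refine le_trans (ENNReal.ofReal_le_ofReal ?_) ENNReal.ofReal_add_le
        linarith
    _ = ∫⁻ x, ENNReal.ofReal (F n x - ε * A n x) ∂ν
        + ENNReal.ofReal ε * ∫⁻ x, ENNReal.ofReal (A n x) ∂ν := by
        have hm : AEMeasurable (fun x => ENNReal.ofReal (F n x - ε * A n x)) ν :=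
          ((hFm n).sub ((hAm n).const_mul ε)).ennreal_ofReal
        rw [lintegral_add_left' hm, lintegral_const_mul' _ _ ENNReal.ofReal_ne_top]
    _ ≤ η / 2 + ENNReal.ofReal ε * M := by
        gcongr; exact hbd n
    _ ≤ η / 2 + η / 2 := by gcongr
    _ = η := ENNReal.add_halves η

lemma lintegral_ofReal_abs_rpow_eq {α : Type*} [MeasurableSpace α] {ν : Measure α} {s : ℝ}
    (hs : 0 < s) (f : α → ℝ) :
    ∫⁻ x, ENNReal.ofReal (|f x| ^ s) ∂ν = eLpNorm f (ENNReal.ofReal s) ν ^ s := by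
  rw [eLpNorm_eq_lintegral_rpow_enorm_toReal (by simpa using hs) ENNReal.ofReal_ne_top,
    ENNReal.toReal_ofReal hs.le, ← ENNReal.rpow_mul, one_div, inv_mul_cancel₀ hs.ne',
    ENNReal.rpow_one]
  refine lintegral_congr fun x => ?_
  rw [Real.enorm_eq_ofReal_abs, ENNReal.ofReal_rpow_of_nonneg (abs_nonneg _) hs.le]

/-- Brezis–Lieb-type convergence for the nonlocal Choquard energy: if `(u_n)` is bounded in
`L^{pq}(ℝ³)`, converges a.e. to `u` and converges to `u` in `L^{pq}` of every ball, then
`∫ | |u_n − u|^p − |u_n|^p + |u|^p |^q → 0`, where `q = 6/(6−μ)`. -/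
theorem brezis_lieb_type
    (μ p : ℝ) (hμ0 : 0 < μ) (hμ3 : μ < 3) (hp2 : 2 ≤ p) (hp6 : p < 6 - μ)
    (q : ℝ) (hq : q = 6 / (6 - μ))
    (u : ℕ → E3 → ℝ) (hu : ∀ n, Measurable (u n)) (ulim : E3 → ℝ)
    (hbdd : ∃ C : ℝ, ∀ n, eLpNorm (u n) (ENNReal.ofReal (p * q)) volume ≤ ENNReal.ofReal C)
    (hae : ∀ᵐ x ∂(volume : Measure E3), Tendsto (fun n => u n x) atTop (nhds (ulim x)))
    (hloc : ∀ R : ℝ, 0 < R →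
      Tendsto (fun n => eLpNorm (fun x => u n x - ulim x) (ENNReal.ofReal (p * q))
        (volume.restrict (Metric.ball (0:E3) R))) atTop (nhds 0)) :
    Tendsto (fun n => ∫ x, |(|u n x - ulim x| ^ p - |u n x| ^ p + |ulim x| ^ p)| ^ q)
      atTop (nhds 0) := by
  have hp : 0 < p := by linarith
  have hq1 : 1 ≤ q := by rw [hq, le_div_iff₀ (by linarith)]; linarith
  have hq0 : 0 < q := by linarith
  have hs : 0 < p * q := mul_pos hp hq0
  have hs1 : 1 ≤ ENNReal.ofReal (p * q) := by
    rw [ENNReal.one_le_ofReal]; nlinarith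
  obtain ⟨C, hC⟩ := hbdd
  have hv : AEMeasurable ulim (volume : Measure E3) :=
    aemeasurable_of_tendsto_metrizable_ae atTop (fun n => (hu n).aemeasurable) hae
  have hvn : eLpNorm ulim (ENNReal.ofReal (p * q)) (volume : Measure E3) ≤ ENNReal.ofReal C := by
    refine (Lp.eLpNorm_lim_le_liminf_eLpNorm (fun n => (hu n).aestronglyMeasurable) ulim hae).trans ?_
    exact (liminf_le_liminf (Eventually.of_forall hC)).trans (by simp)
  have key := brezisLieb_lintegral (ν := (volume : Measure E3)) hp hq0
    (fun n => (hu n).aemeasurable) hv hae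
    (by
      rw [lintegral_ofReal_abs_rpow_eq hs]
      exact ENNReal.rpow_ne_top_of_nonneg hs.le (ne_top_of_le_ne_top ENNReal.ofReal_ne_top hvn))
    (M := (ENNReal.ofReal C + ENNReal.ofReal C) ^ (p * q))
    (ENNReal.rpow_ne_top_of_nonneg hs.le (by simp))
    (fun n => by
      rw [lintegral_ofReal_abs_rpow_eq hs (fun x => u n x - ulim x)]
      refine ENNReal.rpow_le_rpow ?_ hs.le
      exact (eLpNorm_sub_le (hu n).aestronglyMeasurable hv.aestronglyMeasurable hs1).trans
        (add_le_add (hC n) hvn))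
  have hreal := (ENNReal.tendsto_toReal ENNReal.zero_ne_top).comp key
  refine hreal.congr fun n => ?_
  have hun := hu n
  refine (integral_eq_lintegral_of_nonneg_ae (Eventually.of_forall fun x => ?_) ?_).symm
  · exact Real.rpow_nonneg (abs_nonneg _) _
  · exact AEMeasurable.aestronglyMeasurable (by fun_prop)

end
end
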